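/- Let c_n^{+,−} = E_n^sep(A_n^{+,−} | B_1^{+,n}=n), the average of A_n^{+,−}(σ) over indecomposable σ ∈ SEP(n). Then for every real t with |t| < 3 − 2√2, the series G^{+,−}(t) = ∑_{n=1}^∞ s_n c_n^{+,−} t^n converges and G^{+,−}(t) = t(1−t)/√(t² − 6t + 1). -/

import Mathlib

open Finset Filter Real
open scoped Classical

/-- `σ` contains the pattern `τ` (a permutation of `Fin k` given as a function). -/
def ContainsPattern {n k : ℕ} (σ : Equiv.Perm (Fin n)) (τ : Fin k → Fin k) : Prop :=
  ∃ f : Fin k → Fin n, StrictMono f ∧ ∀ a b : Fin k, τ a < τ b ↔ σ (f a) < σ (f b)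

/-- A permutation is separable iff it avoids the patterns 2413 and 3142. -/
def Separable {n : ℕ} (σ : Equiv.Perm (Fin n)) : Prop :=
  ¬ ContainsPattern σ (![1, 3, 0, 2] : Fin 4 → Fin 4) ∧
  ¬ ContainsPattern σ (![2, 0, 3, 1] : Fin 4 → Fin 4)

/-- The set of separable permutations of `[n]`. -/
noncomputable def SEP (n : ℕ) : Finset (Equiv.Perm (Fin n)) :=
  Finset.univ.filter fun σ => Separable σ

/-- `IsAltSeq σ s l` : `l` is a strictly increasing list of indices along which the values of `σ`
alternate, starting with an ascent if `s = true` and starting with a descent if `s = false`. -/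
def IsAltSeq {n : ℕ} (σ : Equiv.Perm (Fin n)) (s : Bool) (l : List (Fin n)) : Prop :=
  l.Chain' (· < ·) ∧
  ∀ j : ℕ, ∀ hj : j + 1 < l.length,
    if decide (j % 2 = 0) = s then
      σ (l.get ⟨j, Nat.lt_of_succ_lt hj⟩) < σ (l.get ⟨j + 1, hj⟩)
    else
      σ (l.get ⟨j + 1, hj⟩) < σ (l.get ⟨j, Nat.lt_of_succ_lt hj⟩)

/-- The length of the longest alternating subsequence of `σ` of type `(s, e)`, where
`true` stands for ascent and `false` for descent.  An alternating subsequence starting with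
an ascent ends with a descent iff its length is odd (and similarly in the other cases), so the
type is encoded by the parity constraint; a singleton counts as a subsequence of types
`(+,-)` and `(-,+)` but not of types `(+,+)` and `(-,-)`. -/
noncomputable def altTypeLen {n : ℕ} (σ : Equiv.Perm (Fin n)) (s e : Bool) : ℕ :=
  sSup {k | ∃ l : List (Fin n), IsAltSeq σ s l ∧ l.length = k ∧
    k % 2 = (if s = e then 0 else 1)}

/-- The length `Aₙ(σ)` of the longest alternating subsequence of `σ`. -/
noncomputable def altLen {n : ℕ} (σ : Equiv.Perm (Fin n)) : ℕ :=
  sSup {k | ∃ l : List (Fin n), (IsAltSeq σ true l ∨ IsAltSeq σ false l) ∧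
    l.length = k ∧ 1 ≤ k}

/-- Expectation with respect to the uniform probability measure on `SEP n`. -/
noncomputable def sepExp (n : ℕ) (f : Equiv.Perm (Fin n) → ℝ) : ℝ :=
  (∑ σ ∈ SEP n, f σ) / (SEP n).card

/-- Variance with respect to the uniform probability measure on `SEP n`. -/
noncomputable def sepVar (n : ℕ) (f : Equiv.Perm (Fin n) → ℝ) : ℝ :=
  sepExp n (fun σ => (f σ - sepExp n f) ^ 2)

/-- `B₁^{+,n}(σ)`: the length of the first indecomposable block (0-indexed positions). -/
noncomputable def Bplus {n : ℕ} (σ : Equiv.Perm (Fin n)) : ℕ :=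
  sInf {j | 1 ≤ j ∧ ∀ i : Fin n, (i : ℕ) < j → (σ i : ℕ) < j}

/-- `B₁^{-,n}(σ)`: the length of the first skew indecomposable block (0-indexed positions). -/
noncomputable def Bminus {n : ℕ} (σ : Equiv.Perm (Fin n)) : ℕ :=
  sInf {j | 1 ≤ j ∧ ∀ i : Fin n, (i : ℕ) < j → n - j ≤ (σ i : ℕ)}

/-- Expectation over indecomposable separable permutations of `[n]`, i.e. the conditional
expectation under the uniform measure on `SEP n` given `{B₁^{+,n} = n}`. -/
noncomputable def indecExp (n : ℕ) (f : Equiv.Perm (Fin n) → ℝ) : ℝ :=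
  (∑ σ ∈ (SEP n).filter (fun σ => Bplus σ = n), f σ) /
    ((SEP n).filter (fun σ => Bplus σ = n)).card

/-!
The longest alternating subsequence of type `(+,-)` reads the peaks of `σ` together with the
valleys separating them, so `A⁺⁻(σ) = 2 · #peaks + 1`. Reversal preserves the number of peaks and,
on separable permutations of size at least `2`, exchanges direct sums and skew sums; hence
conditioning on indecomposability does not change the mean of `A⁺⁻`. Splitting off the first
indecomposable block turns the counting of separable permutations and of their peaks into a
quadratic and a linear equation between generating functions (a new peak appears at the seam exactly
when the remainder begins with a descent). Eliminating, `Δ · A = X - X²` for a power series `Δ` with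
`Δ² = 1 - 6X + X² = (1 - (3 + 2√2)X)(1 - (3 - 2√2)X)`, and the binomial series of the two factors
converge for `|t| < 3 - 2√2`.
-/

/-! ### Peaks and alternating subsequences -/

section Peaks

variable {α : Type*} [LinearOrder α] {f : ℕ → α}

/-- `f` has a peak at index `q + 1`; indexing by the left neighbour avoids truncated subtraction. -/
def IsPeakAt (f : ℕ → α) (q : ℕ) : Prop := f q < f (q + 1) ∧ f (q + 2) < f (q + 1)

/-- `ZigzagTo f p i`: there are indices `i₀ < i₁ < ⋯ < i₂ₚ = i` with
`f i₀ < f i₁ > f i₂ < ⋯ > f i₂ₚ`. -/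
inductive ZigzagTo (f : ℕ → α) : ℕ → ℕ → Prop
  | single (i : ℕ) : ZigzagTo f 0 i
  | step {p i j k : ℕ} (h : ZigzagTo f p i) (hij : i < j) (hjk : j < k) (hup : f i < f j)
      (hdown : f k < f j) : ZigzagTo f (p + 1) k

theorem exists_isPeakAt_of_lt_of_gt (hf : ∀ i, f i ≠ f (i + 1)) {a b c : ℕ} (hab : a < b)
    (hbc : b < c) (hup : f a < f b) (hdown : f c < f b) :
    ∃ q, a ≤ q ∧ q + 2 ≤ c ∧ IsPeakAt f q := by
  obtain ⟨m, hm, hmax⟩ := (Finset.Icc a c).exists_max_image f ⟨a, by simp; omega⟩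
  rw [Finset.mem_Icc] at hm
  have hbm : f b ≤ f m := hmax b (by simp; omega)
  have ham : m ≠ a := by rintro rfl; exact hbm.not_gt hup
  have hmc : m ≠ c := by rintro rfl; exact hbm.not_gt hdown
  obtain ⟨q, rfl⟩ : ∃ q, m = q + 1 := ⟨m - 1, by omega⟩
  exact ⟨q, by omega, by omega, (hmax q (by simp; omega)).lt_of_ne (hf q),
    (hmax (q + 2) (by simp; omega)).lt_of_ne (hf (q + 1)).symm⟩

theorem ZigzagTo.le_count_isPeakAt (hf : ∀ i, f i ≠ f (i + 1)) {p i : ℕ} (h : ZigzagTo f p i) :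
    p ≤ Nat.count (IsPeakAt f) (i - 1) := by
  induction h with
  | single => exact Nat.zero_le _
  | @step p i j k _ hij hjk hup hdown ih =>
    obtain ⟨q, hiq, hqk, hq⟩ := exists_isPeakAt_of_lt_of_gt hf hij hjk hup hdown
    calc p + 1 ≤ Nat.count (IsPeakAt f) q + 1 := by
          gcongr; exact ih.trans (Nat.count_monotone _ (by omega))
      _ = Nat.count (IsPeakAt f) (q + 1) := by rw [Nat.count_succ, if_pos hq]
      _ ≤ Nat.count (IsPeakAt f) (k - 1) := Nat.count_monotone _ (by omega)

theorem ZigzagTo.replace_last {p i k : ℕ} (h : ZigzagTo f p i) (hik : i < k) (hki : f k ≤ f i) :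
    ZigzagTo f p k := by
  cases h with
  | single => exact .single k
  | step h hij hjk hup hdown => exact .step h hij (hjk.trans hik) hup (hki.trans_lt hdown)

theorem count_isPeakAt_of_isPeakAt {m : ℕ} (h : IsPeakAt f m) :
    Nat.count (IsPeakAt f) m = Nat.count (IsPeakAt f) (m - 1) := by
  cases m with
  | zero => rfl
  | succ m => rw [Nat.count_succ, if_neg fun h' => h.1.not_gt h'.2]; rfl

-- Greedy construction: a new peak extends the zigzag found two steps earlier; otherwise the
-- last entry is kept or lowered, so that it never exceeds the current value.
theorem exists_zigzagTo_count_isPeakAt (f : ℕ → α) (m : ℕ) :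
    ∃ i ≤ m, f i ≤ f m ∧ ZigzagTo f (Nat.count (IsPeakAt f) (m - 1)) i := by
  induction m using Nat.twoStepInduction with
  | zero => exact ⟨0, le_rfl, le_rfl, .single 0⟩
  | one => exact ⟨1, le_rfl, le_rfl, .single 1⟩
  | more m ih ih' =>
    rw [Nat.add_sub_assoc (by norm_num), Nat.count_succ]
    by_cases hm : IsPeakAt f m
    · obtain ⟨i, him, hfi, hi⟩ := ih
      rw [if_pos hm, count_isPeakAt_of_isPeakAt hm]
      exact ⟨m + 2, le_rfl, le_rfl,
        hi.step (Nat.lt_succ_of_le him) (Nat.lt_succ_self _) (hfi.trans_lt hm.1) hm.2⟩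
    · obtain ⟨i, him, -, hi⟩ := ih'
      rw [if_neg hm, add_zero]
      rcases le_total (f i) (f (m + 2)) with h | h
      · exact ⟨i, by omega, h, hi⟩
      · exact ⟨m + 2, le_rfl, le_rfl, hi.replace_last (by omega) h⟩

end Peaks

section ExtendNat

variable {n : ℕ} (σ : Equiv.Perm (Fin n))

/-- The extension of `σ` to a permutation of `ℕ` that fixes every `i ≥ n`. It is injective, and its
restriction to `i ≥ n` is increasing, so that range hypotheses become unnecessary. -/
noncomputable def extendNat : Equiv.Perm ℕ := σ.extendDomain Fin.equivSubtype

theorem extendNat_coe (i : Fin n) : extendNat σ i = σ i :=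
  σ.extendDomain_apply_image Fin.equivSubtype i

theorem extendNat_of_le {i : ℕ} (hi : n ≤ i) : extendNat σ i = i :=
  σ.extendDomain_apply_not_subtype Fin.equivSubtype hi.not_gt

theorem extendNat_lt {i : ℕ} (hi : i < n) : extendNat σ i < n :=
  (extendNat_coe σ ⟨i, hi⟩).trans_lt (σ ⟨i, hi⟩).isLt

theorem extendNat_ne_succ (i : ℕ) : extendNat σ i ≠ extendNat σ (i + 1) :=
  (extendNat σ).injective.ne i.succ_ne_self.symm

/-- The number of interior peaks of `σ`. -/
noncomputable def numPeaks : ℕ := Nat.count (IsPeakAt (extendNat σ)) n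

variable {σ}

theorem not_isPeakAt_extendNat {q : ℕ} (hq : n ≤ q + 2) : ¬ IsPeakAt (extendNat σ) q := by
  rintro ⟨-, hdown⟩
  rw [extendNat_of_le σ hq] at hdown
  rcases lt_or_ge (q + 1) n with h | h
  · have := extendNat_lt σ h
    omega
  · rw [extendNat_of_le σ h] at hdown
    omega

theorem count_isPeakAt_eq_numPeaks {m : ℕ} (hm : n ≤ m + 2) :
    Nat.count (IsPeakAt (extendNat σ)) m = numPeaks σ := by
  have hle : ∀ {a b : ℕ}, n ≤ a + 2 →
      Nat.count (IsPeakAt (extendNat σ)) b ≤ Nat.count (IsPeakAt (extendNat σ)) a := by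
    intro a b ha
    simp only [Nat.count_eq_card_filter_range]
    refine Finset.card_le_card fun q hq => ?_
    rw [Finset.mem_filter] at hq ⊢
    exact ⟨Finset.mem_range.2 (by by_contra! h; exact not_isPeakAt_extendNat (by omega) hq.2), hq.2⟩
  exact (hle (by omega)).antisymm (hle hm)

theorem IsAltSeq.append_singleton {s : Bool} {l : List (Fin n)} {i j : Fin n}
    (h : IsAltSeq σ s (l ++ [i])) (hij : i < j)
    (hσ : if decide (l.length % 2 = 0) = s then σ i < σ j else σ j < σ i) :
    IsAltSeq σ s (l ++ [i] ++ [j]) := by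
  refine ⟨List.isChain_append.2 ⟨h.1, List.isChain_singleton j, by simpa using hij⟩, fun q hq => ?_⟩
  simp only [List.length_append, List.length_singleton, add_lt_add_iff_right] at hq
  rcases (Nat.lt_succ_iff_lt_or_eq.1 hq) with hq | rfl
  · have := h.2 q (by simpa using hq)
    simpa [List.getElem_append, hq, hq.trans (Nat.lt_succ_self _)] using this
  · simpa [List.getElem_append] using hσ

theorem IsAltSeq.zigzagTo {l : List (Fin n)} (h : IsAltSeq σ true l) {p : ℕ}
    (hp : 2 * p < l.length) : ZigzagTo (extendNat σ) p l[2 * p] := by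
  have hmono : l.Pairwise (· < ·) := List.isChain_iff_pairwise.1 h.1
  induction p with
  | zero => exact .single _
  | succ p ih =>
    have hup := h.2 (2 * p) (by omega)
    have hdown := h.2 (2 * p + 1) (by omega)
    rw [if_pos (by simp)] at hup
    rw [if_neg (by simp)] at hdown
    refine (ih (by omega)).step (j := l[2 * p + 1]) ?_ ?_ ?_ ?_
    · exact List.pairwise_iff_getElem.1 hmono _ _ _ _ (by omega)
    · exact List.pairwise_iff_getElem.1 hmono _ _ _ _ (by omega)
    · rwa [extendNat_coe, extendNat_coe]
    · rwa [extendNat_coe, extendNat_coe]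

theorem ZigzagTo.exists_isAltSeq {p i : ℕ} (h : ZigzagTo (extendNat σ) p i) (hi : i < n) :
    ∃ l, IsAltSeq σ true (l ++ [⟨i, hi⟩]) ∧ l.length = 2 * p := by
  induction h with
  | single => exact ⟨[], ⟨List.isChain_singleton _, by simp⟩, rfl⟩
  | @step p i j k _ hij hjk hup hdown ih =>
    obtain ⟨l, hl, hlen⟩ := ih (by omega)
    have hj : j < n := hjk.trans hi
    have hup' : σ ⟨i, hij.trans hj⟩ < σ ⟨j, hj⟩ := by
      simpa only [← extendNat_coe, Fin.lt_def] using hup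
    have hdown' : σ ⟨k, hi⟩ < σ ⟨j, hj⟩ := by
      simpa only [← extendNat_coe, Fin.lt_def] using hdown
    refine ⟨l ++ [⟨i, hij.trans hj⟩] ++ [⟨j, hj⟩], ?_, by simp [hlen]; ring⟩
    refine (hl.append_singleton hij ?_).append_singleton hjk ?_
    · rwa [if_pos (by simp [hlen])]
    · rwa [if_neg (by simp [hlen])]

theorem altTypeLen_true_false (σ : Equiv.Perm (Fin n)) (hn : 0 < n) :
    altTypeLen σ true false = 2 * numPeaks σ + 1 := by
  refine IsGreatest.csSup_eq ⟨?_, ?_⟩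
  · obtain ⟨i, hi, -, hzig⟩ := exists_zigzagTo_count_isPeakAt (extendNat σ) (n - 1)
    rw [count_isPeakAt_eq_numPeaks (by omega)] at hzig
    obtain ⟨l, hl, hlen⟩ := hzig.exists_isAltSeq (by omega)
    exact ⟨_, hl, by simp [hlen], by simp⟩
  · rintro k ⟨l, hl, rfl, hodd⟩
    simp only [Bool.true_eq_false, if_false] at hodd
    obtain ⟨p, hp⟩ : ∃ p, l.length = 2 * p + 1 := ⟨l.length / 2, by omega⟩
    have hle := (hl.zigzagTo (p := p) (by omega)).le_count_isPeakAt (extendNat_ne_succ σ)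
    have := Nat.count_monotone (IsPeakAt (extendNat σ)) (show (l[2 * p] : ℕ) - 1 ≤ n by omega)
    unfold numPeaks
    omega

end ExtendNat

/-! ### Pattern containment under reversal, complementation and direct sums -/

section Patterns

variable {n k : ℕ} {σ : Equiv.Perm (Fin n)} {τ : Fin k → Fin k}

theorem ContainsPattern.le (h : ContainsPattern σ τ) : k ≤ n := by
  obtain ⟨f, hf, -⟩ := h
  simpa using Fintype.card_le_of_injective f hf.injective

theorem ContainsPattern.of_strictMono {f : Fin k → Fin n} {τ' : Fin k → Fin k} (hf : StrictMono f)
    (hτ : Function.LeftInverse τ' τ) (hσ : StrictMono fun x => σ (f (τ' x))) :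
    ContainsPattern σ τ :=
  ⟨f, hf, fun a b => by simpa only [hτ a, hτ b] using (hσ.lt_iff_lt (a := τ a) (b := τ b)).symm⟩

theorem ContainsPattern.mul_revPerm (h : ContainsPattern σ τ) :
    ContainsPattern (σ * Fin.revPerm) (τ ∘ Fin.rev) := by
  obtain ⟨f, hf, hσ⟩ := h
  refine ⟨fun a => Fin.rev (f (Fin.rev a)),
    fun a b hab => Fin.rev_lt_rev.2 (hf (Fin.rev_lt_rev.2 hab)), fun a b => ?_⟩
  simpa using hσ (Fin.rev a) (Fin.rev b)

theorem ContainsPattern.revPerm_mul (h : ContainsPattern σ τ) :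
    ContainsPattern (Fin.revPerm * σ) (Fin.rev ∘ τ) := by
  obtain ⟨f, hf, hσ⟩ := h
  exact ⟨f, hf, fun a b => by simpa using hσ b a⟩

@[simp]
theorem revPerm_mul_revPerm : (Fin.revPerm * Fin.revPerm : Equiv.Perm (Fin n)) = 1 :=
  Equiv.ext Fin.rev_rev

theorem Separable.mul_revPerm (h : Separable σ) : Separable (σ * Fin.revPerm) := by
  constructor <;> intro h'
  · refine h.2 ?_
    convert h'.mul_revPerm using 1
    · rw [mul_assoc, revPerm_mul_revPerm, mul_one]
    · decide
  · refine h.1 ?_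
    convert h'.mul_revPerm using 1
    · rw [mul_assoc, revPerm_mul_revPerm, mul_one]
    · decide

theorem Separable.revPerm_mul (h : Separable σ) : Separable (Fin.revPerm * σ) := by
  constructor <;> intro h'
  · refine h.2 ?_
    convert h'.revPerm_mul using 1
    · rw [← mul_assoc, revPerm_mul_revPerm, one_mul]
    · decide
  · refine h.1 ?_
    convert h'.revPerm_mul using 1
    · rw [← mul_assoc, revPerm_mul_revPerm, one_mul]
    · decide

theorem mem_SEP : σ ∈ SEP n ↔ Separable σ := by simp [SEP]

theorem sum_SEP_mul_revPerm {M : Type*} [AddCommMonoid M] (g : Equiv.Perm (Fin n) → M) :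
    ∑ σ ∈ SEP n, g (σ * Fin.revPerm) = ∑ σ ∈ SEP n, g σ :=
  Finset.sum_nbij' (· * Fin.revPerm) (· * Fin.revPerm)
    (fun _ h => mem_SEP.2 (mem_SEP.1 h).mul_revPerm)
    (fun _ h => mem_SEP.2 (mem_SEP.1 h).mul_revPerm)
    (fun σ _ => by simp [mul_assoc]) (fun σ _ => by simp [mul_assoc]) fun _ _ => rfl

theorem sum_SEP_revPerm_mul {M : Type*} [AddCommMonoid M] (g : Equiv.Perm (Fin n) → M) :
    ∑ σ ∈ SEP n, g (Fin.revPerm * σ) = ∑ σ ∈ SEP n, g σ :=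
  Finset.sum_nbij' (Fin.revPerm * ·) (Fin.revPerm * ·)
    (fun _ h => mem_SEP.2 (mem_SEP.1 h).revPerm_mul)
    (fun _ h => mem_SEP.2 (mem_SEP.1 h).revPerm_mul)
    (fun σ _ => by simp [← mul_assoc]) (fun σ _ => by simp [← mul_assoc]) fun _ _ => rfl

theorem SEP_eq_univ (hn : n < 4) : SEP n = Finset.univ :=
  Finset.filter_true_of_mem fun _ _ =>
    ⟨fun h => absurd h.le (by omega), fun h => absurd h.le (by omega)⟩

end Patterns

section PermSum

variable {j m k : ℕ} {α : Equiv.Perm (Fin j)} {β : Equiv.Perm (Fin m)}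

/-- The direct sum of two permutations: `α` on the first `j` letters, a shifted copy of `β` on the
last `m`. -/
def permSum (α : Equiv.Perm (Fin j)) (β : Equiv.Perm (Fin m)) : Equiv.Perm (Fin (j + m)) :=
  finSumFinEquiv.permCongr (Equiv.Perm.sumCongrHom (Fin j) (Fin m) (α, β))

@[simp]
theorem permSum_castAdd (i : Fin j) :
    permSum α β (Fin.castAdd m i) = Fin.castAdd m (α i) := by
  simp [permSum, Equiv.permCongr_apply]

@[simp]
theorem permSum_natAdd (i : Fin m) :
    permSum α β (Fin.natAdd j i) = Fin.natAdd j (β i) := by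
  simp [permSum, Equiv.permCongr_apply]

theorem permSum_injective :
    Function.Injective fun p : Equiv.Perm (Fin j) × Equiv.Perm (Fin m) => permSum p.1 p.2 :=
  (Equiv.injective _).comp Equiv.Perm.sumCongrHom_injective

theorem exists_permSum_eq (σ : Equiv.Perm (Fin (j + m)))
    (h : ∀ i : Fin (j + m), (i : ℕ) < j → (σ i : ℕ) < j) :
    ∃ (α : Equiv.Perm (Fin j)) (β : Equiv.Perm (Fin m)), permSum α β = σ := by
  have hmaps : Set.MapsTo (finSumFinEquiv.permCongr.symm σ) (Set.range Sum.inl)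
      (Set.range Sum.inl) := by
    rintro _ ⟨a, rfl⟩
    refine ⟨⟨_, h (Fin.castAdd m a) a.2⟩, finSumFinEquiv.injective ?_⟩
    simp only [Equiv.permCongr_symm_apply, Equiv.apply_symm_apply, finSumFinEquiv_apply_left]
    rfl
  obtain ⟨⟨α, β⟩, hαβ⟩ := Equiv.Perm.mem_sumCongrHom_range_of_perm_mapsTo_inl hmaps
  exact ⟨α, β, by rw [permSum, hαβ, Equiv.apply_symm_apply]⟩

theorem exists_castAdd_eq {a : Fin (j + m)} (ha : (a : ℕ) < j) : ∃ a', Fin.castAdd m a' = a :=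
  ⟨⟨a, ha⟩, rfl⟩

theorem exists_natAdd_eq {a : Fin (j + m)} (ha : j ≤ a) : ∃ a', Fin.natAdd j a' = a :=
  ⟨⟨a - j, by omega⟩, Fin.ext (Nat.add_sub_of_le ha)⟩

theorem permSum_lt_permSum {a b : Fin (j + m)} (ha : (a : ℕ) < j) (hb : j ≤ b) :
    permSum α β a < permSum α β b := by
  obtain ⟨a, rfl⟩ := exists_castAdd_eq ha
  obtain ⟨b, rfl⟩ := exists_natAdd_eq hb
  rw [permSum_castAdd, permSum_natAdd]
  exact Nat.lt_add_right _ (α a).isLt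

theorem ContainsPattern.permSum_left {τ : Fin k → Fin k} (h : ContainsPattern α τ) :
    ContainsPattern (permSum α β) τ := by
  obtain ⟨f, hf, hα⟩ := h
  exact ⟨fun a => Fin.castAdd m (f a), (Fin.strictMono_castAdd m).comp hf,
    fun a b => by simpa [(Fin.strictMono_castAdd m).lt_iff_lt] using hα a b⟩

theorem ContainsPattern.permSum_right {τ : Fin k → Fin k} (h : ContainsPattern β τ) :
    ContainsPattern (permSum α β) τ := by
  obtain ⟨f, hf, hβ⟩ := h
  exact ⟨fun a => Fin.natAdd j (f a), (Fin.strictMono_natAdd j).comp hf,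
    fun a b => by simpa using hβ a b⟩

theorem ContainsPattern.of_permSum {τ : Fin k → Fin k}
    (hτ : ∀ c : Fin k, 0 < (c : ℕ) → ∃ a b, a < c ∧ c ≤ b ∧ τ b < τ a)
    (h : ContainsPattern (permSum α β) τ) : ContainsPattern α τ ∨ ContainsPattern β τ := by
  obtain ⟨f, hf, hσ⟩ := h
  by_cases hleft : ∀ a, (f a : ℕ) < j
  · choose g hg using fun a => exists_castAdd_eq (hleft a)
    refine .inl ⟨g, fun a b hab => (Fin.strictMono_castAdd m).lt_iff_lt.1 ?_, fun a b => ?_⟩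
    · simpa only [hg] using hf hab
    · rw [hσ, ← hg, ← hg, permSum_castAdd, permSum_castAdd]
      exact (Fin.strictMono_castAdd m).lt_iff_lt
  push Not at hleft
  have hc := Fin.find_spec hleft
  have hlt_c : ∀ {a}, a < Fin.find _ hleft → (f a : ℕ) < j :=
    fun ha => not_le.1 (Fin.find_min hleft ha)
  generalize Fin.find _ hleft = c at hc hlt_c
  have hge_c : ∀ {a}, c ≤ a → j ≤ f a := fun ha => hc.trans (hf.monotone ha)
  rcases Nat.eq_zero_or_pos c with hc0 | hc0
  · choose g hg using fun a => exists_natAdd_eq (hge_c (a := a) (Fin.le_def.2 (by omega)))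
    refine .inr ⟨g, fun a b hab => (Fin.strictMono_natAdd j).lt_iff_lt.1 ?_, fun a b => ?_⟩
    · simpa only [hg] using hf hab
    · rw [hσ, ← hg, ← hg, permSum_natAdd, permSum_natAdd]
      exact (Fin.strictMono_natAdd j).lt_iff_lt
  · obtain ⟨a, b, hac, hcb, hba⟩ := hτ c hc0
    have hab := permSum_lt_permSum (α := α) (β := β) (hlt_c hac) (hge_c hcb)
    exact absurd ((hσ a b).2 hab) hba.not_gt

theorem separable_permSum : Separable (permSum α β) ↔ Separable α ∧ Separable β := by
  constructor
  · exact fun h => ⟨⟨fun h' => h.1 h'.permSum_left, fun h' => h.2 h'.permSum_left⟩,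
      ⟨fun h' => h.1 h'.permSum_right, fun h' => h.2 h'.permSum_right⟩⟩
  · exact fun h => ⟨fun h' => (h'.of_permSum (by decide)).elim h.1.1 h.2.1,
      fun h' => (h'.of_permSum (by decide)).elim h.1.2 h.2.2⟩

end PermSum

/-! ### Sum and skew decompositions of separable permutations -/

section Splits

variable {α : Type*} [LinearOrder α] {f : ℕ → α} {c m : ℕ}

/-- The values of `f` at `0, …, m - 1` are a direct sum with first summand of length `c`. -/
def SplitsAt (f : ℕ → α) (c m : ℕ) : Prop := ∀ i k, i < c → c ≤ k → k < m → f i < f k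

/-- The values of `f` at `0, …, m - 1` are a nontrivial direct sum. -/
def SumSplit (f : ℕ → α) (m : ℕ) : Prop := ∃ c, 0 < c ∧ c < m ∧ SplitsAt f c m

/-- The values of `f` at `0, …, m - 1` are a nontrivial skew sum. -/
def SkewSplit (f : ℕ → α) (m : ℕ) : Prop := SumSplit (OrderDual.toDual ∘ f) m

/-- The values of `f` at `0, …, m - 1` avoid the patterns 2413 and 3142. -/
def SeparableBelow (f : ℕ → α) (m : ℕ) : Prop :=
  ∀ a b c d, a < b → b < c → c < d → d < m →
    ¬ (f c < f a ∧ f a < f d ∧ f d < f b) ∧ ¬ (f b < f d ∧ f d < f a ∧ f a < f c)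

theorem SeparableBelow.dual (h : SeparableBelow f m) : SeparableBelow (OrderDual.toDual ∘ f) m :=
  fun a b c d hab hbc hcd hd =>
    ⟨fun h' => (h a b c d hab hbc hcd hd).2 ⟨h'.2.2, h'.2.1, h'.1⟩,
      fun h' => (h a b c d hab hbc hcd hd).1 ⟨h'.2.2, h'.2.1, h'.1⟩⟩

theorem SeparableBelow.mono (h : SeparableBelow f m) (hc : c ≤ m) : SeparableBelow f c :=
  fun a b c' d hab hbc hcd hd => h a b c' d hab hbc hcd (hd.trans_le hc)

theorem SumSplit.not_skewSplit (h : SumSplit f m) : ¬ SkewSplit f m := by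
  obtain ⟨c, hc0, hcm, hc⟩ := h
  rintro ⟨d, hd0, hdm, hd⟩
  exact lt_asymm (hc 0 (m - 1) hc0 (by omega) (by omega))
    (hd 0 (m - 1) hd0 (by omega) (by omega))

theorem SumSplit.skewSplit_of_reverse (h : SumSplit f m) {g : ℕ → α}
    (hg : ∀ i < m, g i = f (m - 1 - i)) : SkewSplit g m := by
  obtain ⟨c, hc0, hcm, hc⟩ := h
  refine ⟨m - c, by omega, by omega, fun i k hi hk hkm => ?_⟩
  change g k < g i
  rw [hg k hkm, hg i (by omega)]
  exact hc _ _ (by omega) (by omega) (by omega)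

theorem SumSplit.exists_not_sumSplit (h : SumSplit f m) :
    ∃ c, 0 < c ∧ c < m ∧ SplitsAt f c m ∧ ¬ SumSplit f c := by
  obtain ⟨hc0, hcm, hsplit⟩ := Nat.find_spec h
  refine ⟨_, hc0, hcm, hsplit, ?_⟩
  rintro ⟨e, he0, hec, he⟩
  refine Nat.find_min h hec ⟨he0, hec.trans hcm, fun i k hi hk hkm => ?_⟩
  rcases lt_or_ge k (Nat.find h) with hkc | hkc
  · exact he i k hi hk hkc
  · exact hsplit i k (hi.trans hec) hkc hkm

theorem SkewSplit.exists_lt_lt (h : SkewSplit f m) {x : α} {i j : ℕ} (hi : i < m) (hj : j < m)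
    (hfi : x < f i) (hfj : f j < x) : ∃ a b, a < b ∧ b < m ∧ x < f a ∧ f b < x := by
  obtain ⟨c, hc0, hcm, hc⟩ := h
  obtain ⟨a, hac, ha⟩ : ∃ a < c, x < f a := by
    by_cases hic : i < c
    · exact ⟨i, hic, hfi⟩
    · exact ⟨0, hc0, hfi.trans (hc 0 i hc0 (not_lt.1 hic) hi)⟩
  obtain ⟨b, hcb, hbm, hb⟩ : ∃ b, c ≤ b ∧ b < m ∧ f b < x := by
    by_cases hjc : j < c
    · exact ⟨c, le_rfl, hcm, LT.lt.trans (hc j c hjc le_rfl hcm) hfj⟩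
    · exact ⟨j, not_lt.1 hjc, hj, hfj⟩
  exact ⟨a, b, hac.trans_le hcb, hbm, ha, hb⟩

-- Take the shortest first summand. If the new value is neither above all of it nor below
-- everything, that summand is a skew sum straddling the new value, which yields a 3142.
theorem SumSplit.succ (h : SumSplit f m) (hf : SeparableBelow f (m + 1))
    (hne : ∀ i < m, f i ≠ f m)
    (ih : ∀ c, 2 ≤ c → c < m → SumSplit f c ∨ SkewSplit f c) :
    SumSplit f (m + 1) ∨ SkewSplit f (m + 1) := by
  obtain ⟨c, hc0, hcm, hsplit, hmin⟩ := h.exists_not_sumSplit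
  by_cases habove : ∀ i < c, f i < f m
  · refine .inl ⟨c, hc0, hcm.trans m.lt_succ_self, fun i k hi hk hkm => ?_⟩
    rcases Nat.lt_succ_iff_lt_or_eq.1 hkm with h | rfl
    exacts [hsplit i k hi hk h, habove i hi]
  by_cases hbelow : ∀ i < m, f m < f i
  · refine .inr ⟨m, by omega, m.lt_succ_self, fun i k hi hk hkm => ?_⟩
    obtain rfl : k = m := by omega
    exact hbelow i hi
  push Not at habove hbelow
  obtain ⟨i, hic, hi⟩ := habove
  obtain ⟨j, hjm, hj⟩ := hbelow
  replace hi : f m < f i := hi.lt_of_ne (hne i (hic.trans hcm)).symm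
  replace hj : f j < f m := hj.lt_of_ne (hne j hjm)
  have hjc : j < c := by
    by_contra! hcj
    exact lt_asymm (hj.trans hi) (hsplit i j hic hcj hjm)
  have hij : i ≠ j := by
    rintro rfl
    exact lt_asymm hi hj
  have hskew : SkewSplit f c := (ih c (by omega) hcm).resolve_left hmin
  obtain ⟨a, b, hab, hbc, ha, hb⟩ := hskew.exists_lt_lt hic hjc hi hj
  exact absurd ⟨hb, ha, hsplit a c (hab.trans hbc) le_rfl hcm⟩
    (hf a b c m hab hbc hcm m.lt_succ_self).2

theorem SkewSplit.succ (h : SkewSplit f m) (hf : SeparableBelow f (m + 1))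
    (hne : ∀ i < m, f i ≠ f m)
    (ih : ∀ c, 2 ≤ c → c < m → SumSplit f c ∨ SkewSplit f c) :
    SumSplit f (m + 1) ∨ SkewSplit f (m + 1) :=
  (SumSplit.succ h hf.dual hne fun c h2 hc => (ih c h2 hc).symm).symm

theorem SeparableBelow.sumSplit_or_skewSplit (hf : SeparableBelow f m)
    (hinj : Function.Injective f) (hm : 2 ≤ m) : SumSplit f m ∨ SkewSplit f m := by
  induction m using Nat.strong_induction_on with
  | _ m ih =>
    have hsub : ∀ c, 2 ≤ c → c < m → SumSplit f c ∨ SkewSplit f c :=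
      fun c h2 hc => ih c hc (hf.mono hc.le) h2
    obtain ⟨m, rfl⟩ : ∃ k, m = k + 1 := ⟨m - 1, by omega⟩
    have hne : ∀ i < m, f i ≠ f m := fun i hi => hinj.ne hi.ne
    rcases (Nat.succ_le_succ_iff.1 hm).eq_or_lt with rfl | hm
    · have hsplit : ∀ {β : Type _} [LinearOrder β] {g : ℕ → β}, g 0 < g 1 → SumSplit g 2 := by
        refine fun h => ⟨1, one_pos, one_lt_two, fun i k hi hk hkm => ?_⟩
        obtain rfl : i = 0 := by omega
        obtain rfl : k = 1 := by omega
        exact h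
      exact (hne 0 one_pos).lt_or_gt.imp hsplit fun h => hsplit (g := OrderDual.toDual ∘ f) h
    · have hsub' : ∀ c, 2 ≤ c → c < m → SumSplit f c ∨ SkewSplit f c :=
        fun c h2 hc => hsub c h2 (hc.trans m.lt_succ_self)
      rcases hsub m hm m.lt_succ_self with h | h
      exacts [h.succ hf hne hsub', h.succ hf hne hsub']

end Splits

section FirstBlock

variable {n : ℕ} {σ : Equiv.Perm (Fin n)}

theorem Separable.separableBelow_extendNat (h : Separable σ) :
    SeparableBelow (extendNat σ) n := by
  intro a b c d hab hbc hcd hd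
  have hmono : StrictMono (![⟨a, by omega⟩, ⟨b, by omega⟩, ⟨c, by omega⟩, ⟨d, hd⟩] :
      Fin 4 → Fin n) := by
    rw [Fin.strictMono_iff_lt_succ]
    intro i
    fin_cases i <;> simpa
  constructor
  · rintro ⟨hca, had, hdb⟩
    refine h.1 (.of_strictMono (τ' := ![2, 0, 3, 1]) hmono (by decide) ?_)
    rw [Fin.strictMono_iff_lt_succ]
    intro i
    fin_cases i <;> simpa [Fin.lt_def, ← extendNat_coe]
  · rintro ⟨hbd, hda, hac⟩
    refine h.2 (.of_strictMono (τ' := ![1, 3, 0, 2]) hmono (by decide) ?_)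
    rw [Fin.strictMono_iff_lt_succ]
    intro i
    fin_cases i <;> simpa [Fin.lt_def, ← extendNat_coe]

theorem extendNat_mul_revPerm {i : ℕ} (hi : i < n) :
    extendNat (σ * Fin.revPerm) i = extendNat σ (n - 1 - i) := by
  have hrev : n - 1 - i = Fin.rev ⟨i, hi⟩ := by rw [Fin.val_rev, Nat.sub_sub, add_comm 1 i]
  rw [hrev, extendNat_coe]
  exact extendNat_coe _ ⟨i, hi⟩

theorem sumSplit_extendNat_mul_revPerm :
    SumSplit (extendNat (σ * Fin.revPerm)) n ↔ SkewSplit (extendNat σ) n := by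
  constructor
  · refine fun h => h.skewSplit_of_reverse fun i hi => ?_
    rw [extendNat_mul_revPerm (by omega), Nat.sub_sub_self (by omega)]
  · exact fun h => SumSplit.skewSplit_of_reverse (α := ℕᵒᵈ) h fun i hi =>
      congrArg OrderDual.toDual (extendNat_mul_revPerm hi)

theorem Separable.sumSplit_mul_revPerm_iff (h : Separable σ) (hn : 2 ≤ n) :
    SumSplit (extendNat (σ * Fin.revPerm)) n ↔ ¬ SumSplit (extendNat σ) n := by
  rw [sumSplit_extendNat_mul_revPerm]
  exact ⟨fun hskew hsum => hsum.not_skewSplit hskew,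
    (h.separableBelow_extendNat.sumSplit_or_skewSplit (extendNat σ).injective hn).resolve_left⟩

theorem forall_lt_iff_forall_lt_of_le (f : Equiv.Perm ℕ) (c : ℕ) :
    (∀ i < c, f i < c) ↔ ∀ i k, i < c → c ≤ k → f i < f k := by
  constructor
  · intro h i k hi hk
    have hmaps : Set.MapsTo f.symm (Set.Iio c) (Set.Iio c) := f.perm_symm_mapsTo_of_mapsTo h
    refine (h i hi).trans_le (not_lt.1 fun hfk => ?_)
    have : f.symm (f k) < c := hmaps hfk
    rw [f.symm_apply_apply] at this
    omega
  · intro h i hi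
    have hsubset : Set.MapsTo f.symm (Finset.Iic (f i)) (Finset.range c) := by
      intro x hx
      by_contra hc
      have := h i (f.symm x) hi (by simpa using hc)
      simp at hx this
      omega
    simpa using Finset.card_le_card_of_injOn _ hsubset f.symm.injective.injOn

theorem isLeast_Bplus (hn : 0 < n) (σ : Equiv.Perm (Fin n)) :
    IsLeast {j | 1 ≤ j ∧ ∀ i : Fin n, (i : ℕ) < j → (σ i : ℕ) < j} (Bplus σ) :=
  ⟨Nat.sInf_mem ⟨n, hn, fun i _ => (σ i).isLt⟩, fun _ => Nat.sInf_le⟩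

theorem Bplus_le (hn : 0 < n) (σ : Equiv.Perm (Fin n)) : Bplus σ ≤ n :=
  (isLeast_Bplus hn σ).2 ⟨hn, fun i _ => (σ i).isLt⟩

theorem mapsTo_iff_splitsAt {c : ℕ} (hc : c ≤ n) :
    (∀ i : Fin n, (i : ℕ) < c → (σ i : ℕ) < c) ↔ SplitsAt (extendNat σ) c n := by
  calc (∀ i : Fin n, (i : ℕ) < c → (σ i : ℕ) < c)
    _ ↔ ∀ i < c, extendNat σ i < c := by
        simp only [Fin.forall_iff, ← extendNat_coe]
        exact ⟨fun h i hi => h i (hi.trans_le hc) hi, fun h i _ hi => h i hi⟩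
    _ ↔ ∀ i k, i < c → c ≤ k → extendNat σ i < extendNat σ k := forall_lt_iff_forall_lt_of_le _ _
    _ ↔ SplitsAt (extendNat σ) c n := by
        refine ⟨fun h i k hi hk _ => h i k hi hk, fun h i k hi hk => ?_⟩
        rcases lt_or_ge k n with hkn | hkn
        · exact h i k hi hk hkn
        · rw [extendNat_of_le σ hkn]
          exact (extendNat_lt σ (hi.trans_le hc)).trans_le hkn

theorem Bplus_lt_iff_sumSplit (hn : 0 < n) : Bplus σ < n ↔ SumSplit (extendNat σ) n := by
  obtain ⟨⟨hpos, hmaps⟩, hleast⟩ := isLeast_Bplus hn σ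
  constructor
  · exact fun h => ⟨Bplus σ, hpos, h, (mapsTo_iff_splitsAt h.le).1 hmaps⟩
  · rintro ⟨c, hc0, hcn, hc⟩
    exact (hleast ⟨hc0, (mapsTo_iff_splitsAt hcn.le).2 hc⟩).trans_lt hcn

end FirstBlock

/-! ### Statistics under reversal, complementation and direct sums -/

section Statistics

variable {n j m : ℕ} {σ : Equiv.Perm (Fin n)} {α : Equiv.Perm (Fin j)} {β : Equiv.Perm (Fin m)}

/-- The indicator, as a number, of the event that `σ` begins with a descent. -/
noncomputable def initialDescent (σ : Equiv.Perm (Fin n)) : ℕ :=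
  if extendNat σ 1 < extendNat σ 0 then 1 else 0

theorem numPeaks_le_numPeaks_mul_revPerm (σ : Equiv.Perm (Fin n)) :
    numPeaks σ ≤ numPeaks (σ * Fin.revPerm) := by
  simp only [numPeaks, Nat.count_eq_card_filter_range]
  have hlt : ∀ {q}, IsPeakAt (extendNat σ) q → q + 2 < n :=
    fun hq => by by_contra! h; exact not_isPeakAt_extendNat h hq
  refine Finset.card_le_card_of_injOn (fun q => n - 3 - q) (fun q hq => ?_)
    fun q hq q' hq' h => ?_
  · have hq := (Finset.mem_filter.1 hq).2
    have hqn := hlt hq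
    dsimp only
    refine Finset.mem_filter.2 ⟨Finset.mem_range.2 (by omega), ?_⟩
    rw [IsPeakAt, extendNat_mul_revPerm (by omega), extendNat_mul_revPerm (by omega),
      extendNat_mul_revPerm (by omega), show n - 1 - (n - 3 - q) = q + 2 by omega,
      show n - 1 - (n - 3 - q + 1) = q + 1 by omega, show n - 1 - (n - 3 - q + 2) = q by omega]
    exact hq.symm
  · have := hlt (Finset.mem_filter.1 hq).2
    have := hlt (Finset.mem_filter.1 hq').2
    dsimp only at h
    omega

theorem numPeaks_mul_revPerm (σ : Equiv.Perm (Fin n)) :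
    numPeaks (σ * Fin.revPerm) = numPeaks σ := by
  refine le_antisymm ?_ (numPeaks_le_numPeaks_mul_revPerm σ)
  have h := numPeaks_le_numPeaks_mul_revPerm (σ * Fin.revPerm)
  rwa [mul_assoc, revPerm_mul_revPerm, mul_one] at h

theorem altTypeLen_mul_revPerm (σ : Equiv.Perm (Fin n)) :
    altTypeLen (σ * Fin.revPerm) true false = altTypeLen σ true false := by
  rcases Nat.eq_zero_or_pos n with rfl | hn
  · rw [Subsingleton.elim (σ * Fin.revPerm) σ]
  · rw [altTypeLen_true_false _ hn, altTypeLen_true_false _ hn, numPeaks_mul_revPerm]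

theorem initialDescent_add_initialDescent_revPerm_mul (hn : 2 ≤ n) (σ : Equiv.Perm (Fin n)) :
    initialDescent σ + initialDescent (Fin.revPerm * σ) = 1 := by
  have hcoe : ∀ {τ : Equiv.Perm (Fin n)}, extendNat τ 1 < extendNat τ 0 ↔
      τ ⟨1, hn⟩ < τ ⟨0, by omega⟩ := by
    intro τ
    rw [Fin.lt_def, ← extendNat_coe, ← extendNat_coe]
  have hne : σ ⟨1, hn⟩ ≠ σ ⟨0, by omega⟩ := σ.injective.ne (by simp)
  simp only [initialDescent, hcoe, Equiv.Perm.mul_apply, Fin.revPerm_apply, Fin.rev_lt_rev]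
  rcases hne.lt_or_gt with h | h
  · rw [if_pos h, if_neg h.not_gt]
  · rw [if_neg h.not_gt, if_pos h]

theorem extendNat_permSum_of_lt {i : ℕ} (hi : i < j) :
    extendNat (permSum α β) i = extendNat α i := by
  rw [show i = ((⟨i, hi⟩ : Fin j) : ℕ) from rfl, extendNat_coe α]
  exact (extendNat_coe _ (Fin.castAdd m ⟨i, hi⟩)).trans (by rw [permSum_castAdd, Fin.val_castAdd])

theorem extendNat_permSum_add (i : ℕ) :
    extendNat (permSum α β) (j + i) = j + extendNat β i := by
  rcases lt_or_ge i m with hi | hi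
  · rw [show i = ((⟨i, hi⟩ : Fin m) : ℕ) from rfl, extendNat_coe β]
    exact (extendNat_coe _ (Fin.natAdd j ⟨i, hi⟩)).trans (by rw [permSum_natAdd, Fin.val_natAdd])
  · rw [extendNat_of_le _ (by omega), extendNat_of_le β hi]

theorem isPeakAt_permSum_of_lt {i : ℕ} (hi : i + 1 < j) :
    IsPeakAt (extendNat (permSum α β)) i ↔ IsPeakAt (extendNat α) i := by
  rcases Nat.lt_or_ge (i + 2) j with hij | hij
  · rw [IsPeakAt, IsPeakAt, extendNat_permSum_of_lt hij, extendNat_permSum_of_lt hi,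
      extendNat_permSum_of_lt (by omega)]
  · refine iff_of_false (fun h => h.2.not_ge ?_) (not_isPeakAt_extendNat hij)
    obtain rfl : j = i + 2 := by omega
    have h0 : extendNat (permSum α β) (i + 2) = i + 2 + extendNat β 0 := extendNat_permSum_add 0
    have hlt := extendNat_lt α hi
    rw [h0, extendNat_permSum_of_lt hi]
    omega

theorem isPeakAt_permSum_last (α : Equiv.Perm (Fin (j + 1))) :
    IsPeakAt (extendNat (permSum α β)) j ↔ extendNat β 1 < extendNat β 0 := by
  have h0 : extendNat (permSum α β) (j + 1) = j + 1 + extendNat β 0 := extendNat_permSum_add 0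
  have h1 : extendNat (permSum α β) (j + 2) = j + 1 + extendNat β 1 := extendNat_permSum_add 1
  have hj := extendNat_lt α j.lt_succ_self
  rw [IsPeakAt, h0, h1, extendNat_permSum_of_lt j.lt_succ_self]
  omega

theorem isPeakAt_permSum_add (i : ℕ) :
    IsPeakAt (extendNat (permSum α β)) (j + i) ↔ IsPeakAt (extendNat β) i := by
  simp only [IsPeakAt, add_assoc, extendNat_permSum_add, add_lt_add_iff_left]

theorem numPeaks_permSum (hj : 0 < j) (α : Equiv.Perm (Fin j)) (β : Equiv.Perm (Fin m)) :
    numPeaks (permSum α β) = numPeaks α + numPeaks β + initialDescent β := by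
  obtain ⟨j, rfl⟩ : ∃ k, j = k + 1 := ⟨j - 1, by omega⟩
  have hleft : Nat.count (IsPeakAt (extendNat (permSum α β))) j = numPeaks α := by
    rw [← count_isPeakAt_eq_numPeaks (σ := α) (m := j) (by omega)]
    simp only [Nat.count_eq_card_filter_range]
    exact congrArg Finset.card (Finset.filter_congr fun i hi =>
      isPeakAt_permSum_of_lt (by simpa using hi))
  rw [numPeaks, Nat.count_add, Nat.count_succ, hleft]
  simp only [isPeakAt_permSum_add, isPeakAt_permSum_last]
  exact add_right_comm _ _ _

end Statistics

/-! ### Counting separable permutations by their first block -/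

section Counting

variable {n j m : ℕ} {σ : Equiv.Perm (Fin n)}

/-- The indecomposable separable permutations of `[n]`. -/
noncomputable def indecSEP (n : ℕ) : Finset (Equiv.Perm (Fin n)) :=
  (SEP n).filter fun σ => Bplus σ = n

theorem mem_indecSEP : σ ∈ indecSEP n ↔ Separable σ ∧ Bplus σ = n := by
  rw [indecSEP, Finset.mem_filter, mem_SEP]

theorem mem_indecSEP_iff_not_sumSplit (hn : 0 < n) :
    σ ∈ indecSEP n ↔ σ ∈ SEP n ∧ ¬ SumSplit (extendNat σ) n := by
  rw [indecSEP, Finset.mem_filter, ← Bplus_lt_iff_sumSplit hn, not_lt,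
    (Bplus_le hn σ).ge_iff_eq]

theorem indecSEP_zero : indecSEP 0 = ∅ := by
  have hBplus : ∀ σ : Equiv.Perm (Fin 0), Bplus σ ≠ 0 := fun σ =>
    (Nat.succ_le_iff.1 (Nat.sInf_mem (s := {j | 1 ≤ j ∧ ∀ i : Fin 0, (i : ℕ) < j → (σ i : ℕ) < j})
      ⟨1, le_rfl, fun i => i.elim0⟩).1).ne'
  exact Finset.filter_false_of_mem fun σ _ => hBplus σ

theorem indecSEP_one : indecSEP 1 = SEP 1 :=
  Finset.filter_true_of_mem fun σ _ =>
    le_antisymm (Bplus_le one_pos σ) (isLeast_Bplus one_pos σ).1.1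

theorem Bplus_permSum (hj : 0 < j) (α : Equiv.Perm (Fin j)) (β : Equiv.Perm (Fin m)) :
    Bplus (permSum α β) = Bplus α := by
  have hiff : ∀ c ≤ j, (∀ i : Fin (j + m), (i : ℕ) < c → (permSum α β i : ℕ) < c) ↔
      ∀ i : Fin j, (i : ℕ) < c → (α i : ℕ) < c := by
    refine fun c hc => ⟨fun h i hi => ?_, fun h i hi => ?_⟩
    · simpa using h (Fin.castAdd m i) hi
    · obtain ⟨i, rfl⟩ := exists_castAdd_eq (hi.trans_le hc)
      simpa using h i hi
  have hα := isLeast_Bplus hj α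
  have hsum := isLeast_Bplus (Nat.add_pos_left hj m) (permSum α β)
  have hle : Bplus (permSum α β) ≤ Bplus α :=
    hsum.2 ⟨hα.1.1, (hiff _ (Bplus_le hj α)).2 hα.1.2⟩
  exact hle.antisymm (hα.2 ⟨hsum.1.1, (hiff _ (hle.trans (Bplus_le hj α))).1 hsum.1.2⟩)

variable {M : Type*} [AddCommMonoid M]

theorem sum_filter_Bplus_eq (hj : 0 < j) (g : Equiv.Perm (Fin (j + m)) → M) :
    ∑ σ ∈ SEP (j + m) with Bplus σ = j, g σ =
      ∑ α ∈ indecSEP j, ∑ β ∈ SEP m, g (permSum α β) := by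
  rw [← Finset.sum_product']
  refine (Finset.sum_bij (fun p _ => permSum p.1 p.2) (fun p hp => ?_)
    (fun _ _ _ _ h => permSum_injective h) (fun σ hσ => ?_) fun _ _ => rfl).symm
  · rw [Finset.mem_product, mem_indecSEP, mem_SEP] at hp
    rw [Finset.mem_filter, mem_SEP, separable_permSum, Bplus_permSum hj]
    exact ⟨⟨hp.1.1, hp.2⟩, hp.1.2⟩
  · rw [Finset.mem_filter, mem_SEP] at hσ
    have hmaps := (isLeast_Bplus (Nat.add_pos_left hj m) σ).1.2
    rw [hσ.2] at hmaps
    obtain ⟨α, β, rfl⟩ := exists_permSum_eq σ hmaps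
    rw [separable_permSum, Bplus_permSum hj] at hσ
    refine ⟨(α, β), ?_, rfl⟩
    rw [Finset.mem_product, mem_indecSEP, mem_SEP]
    exact ⟨⟨hσ.1.1, hσ.2⟩, hσ.1.2⟩

theorem sum_SEP_eq_sum_antidiagonal (hn : 0 < n) (g : ∀ n, Equiv.Perm (Fin n) → M) :
    ∑ σ ∈ SEP n, g n σ = ∑ p ∈ Finset.HasAntidiagonal.antidiagonal n,
      ∑ α ∈ indecSEP p.1, ∑ β ∈ SEP p.2, g (p.1 + p.2) (permSum α β) := by
  rw [← Finset.sum_fiberwise_of_maps_to (t := Finset.HasAntidiagonal.antidiagonal n)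
    (g := fun σ => (Bplus σ, n - Bplus σ))
    fun σ _ => Finset.HasAntidiagonal.mem_antidiagonal.2 (Nat.add_sub_of_le (Bplus_le hn σ))]
  refine Finset.sum_congr rfl fun ⟨j, m⟩ hp => ?_
  obtain rfl : j + m = n := Finset.HasAntidiagonal.mem_antidiagonal.1 hp
  have hfiber : ∀ σ : Equiv.Perm (Fin (j + m)),
      (Bplus σ, j + m - Bplus σ) = (j, m) ↔ Bplus σ = j := by
    simp only [Prod.mk.injEq]
    omega
  simp only [hfiber]
  rcases Nat.eq_zero_or_pos j with rfl | hj
  · rw [indecSEP_zero, Finset.sum_empty, Finset.filter_false_of_mem, Finset.sum_empty]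
    exact fun σ _ => (Nat.succ_le_iff.1 (isLeast_Bplus hn σ).1.1).ne'
  · exact sum_filter_Bplus_eq hj _

-- Reversal exchanges direct and skew sums, and a separable permutation of length at least two is
-- exactly one of the two.
theorem two_nsmul_sum_indecSEP (hn : 2 ≤ n) {w : Equiv.Perm (Fin n) → M}
    (hw : ∀ σ, w (σ * Fin.revPerm) = w σ) :
    2 • ∑ σ ∈ indecSEP n, w σ = ∑ σ ∈ SEP n, w σ := by
  have hindec : indecSEP n = {σ ∈ SEP n | ¬ SumSplit (extendNat σ) n} := by
    ext σ
    rw [mem_indecSEP_iff_not_sumSplit (by omega), Finset.mem_filter]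
  have hrev : ∑ σ ∈ indecSEP n, w σ = ∑ σ ∈ SEP n with SumSplit (extendNat σ) n, w σ := by
    rw [hindec, Finset.sum_filter, Finset.sum_filter, ← sum_SEP_mul_revPerm]
    refine Finset.sum_congr rfl fun σ hσ => ?_
    simp only [(mem_SEP.1 hσ).sumSplit_mul_revPerm_iff hn, not_not, hw]
  rw [two_nsmul]
  nth_rewrite 1 [hrev]
  rw [hindec, Finset.sum_filter_add_sum_filter_not]

theorem two_mul_sum_initialDescent (hn : 2 ≤ n) :
    2 * ∑ σ ∈ SEP n, initialDescent σ = #(SEP n) := by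
  calc 2 * ∑ σ ∈ SEP n, initialDescent σ
      = ∑ σ ∈ SEP n, (initialDescent σ + initialDescent (Fin.revPerm * σ)) := by
        rw [Finset.sum_add_distrib, sum_SEP_revPerm_mul, two_mul]
    _ = #(SEP n) := by
        simp only [initialDescent_add_initialDescent_revPerm_mul hn, Finset.sum_const,
          smul_eq_mul, mul_one]

theorem card_mul_indecExp (hn : 0 < n) {w : Equiv.Perm (Fin n) → ℝ}
    (hw : ∀ σ, w (σ * Fin.revPerm) = w σ) :
    (#(SEP n) : ℝ) * indecExp n w = ∑ σ ∈ SEP n, w σ := by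
  rw [indecExp, ← indecSEP]
  have hcancel : (#(indecSEP n) : ℝ) * ((∑ σ ∈ indecSEP n, w σ) / #(indecSEP n)) =
      ∑ σ ∈ indecSEP n, w σ := by
    refine mul_div_cancel_of_imp' fun h => ?_
    rw [Finset.card_eq_zero.1 (Nat.cast_eq_zero.1 h), Finset.sum_empty]
  rcases (Nat.succ_le_iff.2 hn).eq_or_lt with rfl | hn
  · rwa [indecSEP_one] at hcancel ⊢
  · have hcard : 2 • ∑ _σ ∈ indecSEP n, (1 : ℝ) = ∑ _σ ∈ SEP n, (1 : ℝ) :=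
      two_nsmul_sum_indecSEP hn fun _ => rfl
    have hsum := two_nsmul_sum_indecSEP hn hw
    simp only [Finset.sum_const, nsmul_eq_mul, mul_one] at hcard
    rw [nsmul_eq_mul] at hsum
    rw [← hcard, ← hsum, mul_assoc, hcancel]

end Counting

/-! ### Generating functions -/

section GeneratingFunctions

open scoped PowerSeries

open PowerSeries (C X coeff)

/-- The generating function of a statistic `w` over separable permutations. -/
noncomputable def sepSeries (w : ∀ n, Equiv.Perm (Fin n) → ℕ) : ℝ⟦X⟧ :=
  PowerSeries.mk fun n => ∑ σ ∈ SEP n, (w n σ : ℝ)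

/-- The generating function of a statistic `w` over indecomposable separable permutations. -/
noncomputable def indecSeries (w : ∀ n, Equiv.Perm (Fin n) → ℕ) : ℝ⟦X⟧ :=
  PowerSeries.mk fun n => ∑ σ ∈ indecSEP n, (w n σ : ℝ)

theorem numPeaks_of_lt_three {n : ℕ} (hn : n < 3) (σ : Equiv.Perm (Fin n)) : numPeaks σ = 0 := by
  rw [← count_isPeakAt_eq_numPeaks (m := 0) (by omega), Nat.count_zero]

theorem initialDescent_of_lt_two {n : ℕ} (hn : n < 2) (σ : Equiv.Perm (Fin n)) :
    initialDescent σ = 0 := by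
  refine if_neg ?_
  rw [extendNat_of_le σ (Nat.le_of_lt_succ hn), not_lt]
  rcases Nat.eq_zero_or_pos n with rfl | hpos
  · rw [extendNat_of_le σ le_rfl]
    exact zero_le_one
  · exact (extendNat_lt σ hpos).le.trans (Nat.le_of_lt_succ hn)

theorem altTypeLen_true_false_zero (σ : Equiv.Perm (Fin 0)) : altTypeLen σ true false = 0 := by
  refine (congrArg sSup (Set.eq_empty_of_forall_notMem ?_)).trans csSup_empty
  rintro _ ⟨l, -, rfl, hodd⟩
  rw [List.eq_nil_of_length_eq_zero (Nat.eq_zero_of_not_pos fun h => (l.get ⟨0, h⟩).elim0)] at hodd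
  exact absurd hodd (by simp)

theorem two_mul_indecSeries {w : ∀ n, Equiv.Perm (Fin n) → ℕ}
    (hw : ∀ n (σ : Equiv.Perm (Fin n)), w n (σ * Fin.revPerm) = w n σ) :
    2 * indecSeries w = sepSeries w - C (w 0 1 : ℝ) +
      C (w 1 1 : ℝ) * X := by
  ext n
  rw [two_mul]
  simp only [map_add, map_sub, sepSeries, indecSeries, PowerSeries.coeff_mk, PowerSeries.coeff_C,
    PowerSeries.coeff_C_mul, PowerSeries.coeff_X]
  obtain rfl | rfl | hn : n = 0 ∨ n = 1 ∨ 2 ≤ n := by omega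
  · simp [indecSEP_zero, SEP_eq_univ]
  · simp [indecSEP_one, SEP_eq_univ]
  · rw [← two_nsmul_sum_indecSEP hn fun σ => by rw [hw], two_nsmul, if_neg (by omega),
      if_neg (by omega)]
    ring

theorem two_mul_indecSeries_one :
    2 * indecSeries 1 = sepSeries 1 - 1 + X := by
  simpa only [Pi.one_apply, Nat.cast_one, map_one, one_mul] using
    two_mul_indecSeries (w := 1) fun _ _ => rfl

theorem two_mul_indecSeries_numPeaks : 2 * indecSeries @numPeaks = sepSeries @numPeaks := by
  have h := two_mul_indecSeries (w := @numPeaks) fun _ σ => numPeaks_mul_revPerm σ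
  rwa [numPeaks_of_lt_three (by norm_num), numPeaks_of_lt_three (by norm_num), Nat.cast_zero,
    map_zero, sub_zero, zero_mul, add_zero] at h

theorem two_mul_sepSeries_initialDescent :
    2 * sepSeries @initialDescent = sepSeries 1 - 1 - X := by
  ext n
  rw [two_mul]
  simp only [map_add, map_sub, sepSeries, PowerSeries.coeff_mk, PowerSeries.coeff_one,
    PowerSeries.coeff_X]
  obtain rfl | rfl | hn : n = 0 ∨ n = 1 ∨ 2 ≤ n := by omega
  · simp [SEP_eq_univ, initialDescent_of_lt_two]
  · simp [SEP_eq_univ, initialDescent_of_lt_two]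
  · have h : 2 * ∑ σ ∈ SEP n, (initialDescent σ : ℝ) = #(SEP n) := by
      exact_mod_cast two_mul_sum_initialDescent hn
    rw [← two_mul, h, if_neg (by omega), if_neg (by omega), sub_zero, sub_zero]
    simp only [Pi.one_apply, Nat.cast_one, Finset.sum_const, nsmul_eq_mul, mul_one]

theorem sepSeries_one_eq :
    sepSeries 1 = 1 + indecSeries 1 * sepSeries 1 := by
  ext n
  simp only [map_add, PowerSeries.coeff_mul, PowerSeries.coeff_one, sepSeries, indecSeries,
    PowerSeries.coeff_mk, Pi.one_apply, Nat.cast_one]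
  rcases Nat.eq_zero_or_pos n with rfl | hn
  · simp [indecSEP_zero, SEP_eq_univ]
  · rw [sum_SEP_eq_sum_antidiagonal hn fun _ _ => (1 : ℝ), if_neg hn.ne', zero_add]
    simp only [Finset.sum_const, nsmul_eq_mul, mul_one]

theorem sepSeries_numPeaks_eq : sepSeries @numPeaks =
    indecSeries @numPeaks * sepSeries 1 + indecSeries 1 *
      sepSeries @numPeaks + indecSeries 1 * sepSeries @initialDescent := by
  ext n
  simp only [map_add, PowerSeries.coeff_mul, sepSeries, indecSeries, PowerSeries.coeff_mk,
    ← Finset.sum_add_distrib]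
  rcases Nat.eq_zero_or_pos n with rfl | hn
  · simp [SEP_eq_univ, indecSEP_zero, numPeaks_of_lt_three]
  rw [sum_SEP_eq_sum_antidiagonal hn fun _ σ => (numPeaks σ : ℝ)]
  refine Finset.sum_congr rfl fun ⟨j, m⟩ _ => ?_
  rcases Nat.eq_zero_or_pos j with rfl | hj
  · simp only [indecSEP_zero, Finset.sum_empty, zero_mul, add_zero]
  · simp only [numPeaks_permSum hj, Pi.one_apply, Finset.sum_mul_sum, ← Finset.sum_add_distrib,
      Nat.cast_add, Nat.cast_one, mul_one, one_mul]

theorem sepSeries_altTypeLen_eq : sepSeries (fun _ σ => altTypeLen σ true false) =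
    sepSeries 1 - 1 + 2 * sepSeries @numPeaks := by
  ext n
  rw [two_mul]
  simp only [map_add, map_sub, sepSeries, PowerSeries.coeff_mk, PowerSeries.coeff_one]
  rcases Nat.eq_zero_or_pos n with rfl | hn
  · simp [SEP_eq_univ, numPeaks_of_lt_three, altTypeLen_true_false_zero]
  · simp only [altTypeLen_true_false _ hn, if_neg hn.ne', sub_zero, Pi.one_apply,
      ← Finset.sum_add_distrib]
    refine Finset.sum_congr rfl fun σ _ => ?_
    push_cast
    ring

/-- The power series with constant coefficient `1` and square `1 - 6X + X²`, obtained by solving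
the quadratic equation satisfied by the generating function of separable permutations. -/
noncomputable def discrSqrt : ℝ⟦X⟧ := 3 - X - 2 * sepSeries 1

theorem constantCoeff_discrSqrt : PowerSeries.constantCoeff discrSqrt = 1 := by
  have h : PowerSeries.constantCoeff (sepSeries 1) = 1 := by
    rw [sepSeries, ← PowerSeries.coeff_zero_eq_constantCoeff_apply, PowerSeries.coeff_mk,
      SEP_eq_univ (by norm_num), Fintype.sum_unique, Pi.one_apply, Pi.one_apply, Nat.cast_one]
  rw [discrSqrt, map_sub, map_sub, map_mul, h, PowerSeries.constantCoeff_X, map_ofNat, map_ofNat]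
  norm_num

theorem discrSqrt_sq : discrSqrt ^ 2 = 1 - 6 * X + X ^ 2 := by
  rw [discrSqrt]
  linear_combination -8 * sepSeries_one_eq - 4 * sepSeries 1 * two_mul_indecSeries_one

theorem discrSqrt_mul_sepSeries_altTypeLen :
    discrSqrt * sepSeries (fun _ σ => altTypeLen σ true false) = X - X ^ 2 := by
  rw [discrSqrt, sepSeries_altTypeLen_eq]
  linear_combination 4 * sepSeries_numPeaks_eq +
    2 * sepSeries 1 * two_mul_indecSeries_numPeaks +
    2 * sepSeries @numPeaks * two_mul_indecSeries_one +
    2 * indecSeries 1 * two_mul_sepSeries_initialDescent +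
    (sepSeries 1 - 1 - X) * two_mul_indecSeries_one + 2 * sepSeries_one_eq +
    sepSeries 1 * two_mul_indecSeries_one

end GeneratingFunctions

/-! ### Evaluation on the disc of convergence -/

section Evaluation

open scoped PowerSeries

open PowerSeries (C X coeff constantCoeff)

theorem hasSum_coeff_polynomial_mul_pow (P : Polynomial ℝ) (t : ℝ) :
    HasSum (fun n => coeff n (P : ℝ⟦X⟧) * t ^ n) (P.eval t) := by
  simp only [Polynomial.coeff_coe]
  rw [Polynomial.eval_eq_sum]
  refine hasSum_sum_of_ne_finset_zero fun n hn => ?_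
  rw [Polynomial.notMem_support_iff.1 hn, zero_mul]

theorem hasSum_coeff_mul_mul_pow {F G : ℝ⟦X⟧} {t v w : ℝ}
    (hF : HasSum (fun n => coeff n F * t ^ n) v) (hG : HasSum (fun n => coeff n G * t ^ n) w) :
    HasSum (fun n => coeff n (F * G) * t ^ n) (v * w) := by
  have hcoeff : ∀ n, coeff n (F * G) * t ^ n = ∑ p ∈ Finset.HasAntidiagonal.antidiagonal n,
      (coeff p.1 F * t ^ p.1) * (coeff p.2 G * t ^ p.2) := by
    intro n
    rw [PowerSeries.coeff_mul, Finset.sum_mul]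
    refine Finset.sum_congr rfl fun p hp => ?_
    rw [← Finset.HasAntidiagonal.mem_antidiagonal.1 hp, pow_add, mul_mul_mul_comm]
  simp only [hcoeff]
  rw [← hF.tsum_eq, ← hG.tsum_eq, tsum_mul_tsum_eq_tsum_sum_antidiagonal_of_summable_norm
    hF.summable.norm hG.summable.norm]
  exact (summable_norm_sum_mul_antidiagonal_of_summable_norm
    hF.summable.norm hG.summable.norm).of_norm.hasSum

/-- The expansion of `1 / √(1 - aX)`. -/
noncomputable def invSqrtOneSub (a : ℝ) : ℝ⟦X⟧ :=
  PowerSeries.rescale (-a) (PowerSeries.binomialSeries ℝ (-1 / 2 : ℝ))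

theorem constantCoeff_invSqrtOneSub (a : ℝ) : constantCoeff (invSqrtOneSub a) = 1 := by
  rw [invSqrtOneSub, ← PowerSeries.coeff_zero_eq_constantCoeff_apply, PowerSeries.coeff_rescale,
    pow_zero, one_mul, PowerSeries.coeff_zero_eq_constantCoeff_apply,
    PowerSeries.binomialSeries_constantCoeff]

theorem invSqrtOneSub_sq_mul (a : ℝ) : invSqrtOneSub a ^ 2 * (1 - C a * X) = 1 := by
  have h1 : (1 + X : ℝ⟦X⟧) = PowerSeries.binomialSeries ℝ (1 : ℝ) := by
    simpa only [Nat.cast_one, pow_one] using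
      (PowerSeries.binomialSeries_nat (R := ℝ) (A := ℝ) 1).symm
  have hX : (1 - C a * X : ℝ⟦X⟧) = PowerSeries.rescale (-a) (1 + X) := by
    rw [map_add, map_one, PowerSeries.rescale_X, map_neg, neg_mul, sub_eq_add_neg]
  rw [hX, h1, invSqrtOneSub, ← map_pow, ← map_mul, sq, ← PowerSeries.binomialSeries_add,
    ← PowerSeries.binomialSeries_add]
  norm_num

theorem hasSum_coeff_invSqrtOneSub {a t : ℝ} (h : |a * t| < 1) :
    HasSum (fun n => coeff n (invSqrtOneSub a) * t ^ n) (√(1 - a * t))⁻¹ := by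
  have hmem : -(a * t) ∈ Metric.eball (0 : ℝ) 1 := by
    rw [← ENNReal.ofReal_one, Metric.eball_ofReal, mem_ball_zero_iff, norm_neg]
    exact h
  have hval : (√(1 - a * t))⁻¹ = (1 + (0 + -(a * t))) ^ (-1 / 2 : ℝ) := by
    rw [zero_add, ← sub_eq_add_neg, neg_div, Real.rpow_neg (by linarith [abs_lt.1 h]),
      Real.sqrt_eq_rpow]
  have hterm : ∀ n, coeff n (invSqrtOneSub a) * t ^ n =
      binomialSeries ℝ (-1 / 2 : ℝ) n fun _ => -(a * t) := by
    intro n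
    rw [invSqrtOneSub, PowerSeries.coeff_rescale, PowerSeries.binomialSeries_coeff,
      binomialSeries_apply, List.ofFn_const, List.prod_replicate, ← neg_mul, mul_pow, smul_eq_mul,
      smul_eq_mul, mul_one, mul_right_comm, mul_comm]
  simp only [hval, hterm]
  exact Real.one_add_rpow_hasFPowerSeriesOnBall_zero.hasSum hmem

theorem sq_sqrt_two : √2 ^ 2 = 2 := Real.sq_sqrt (by norm_num)

theorem discrSqrt_mul_invSqrtOneSub :
    discrSqrt * (invSqrtOneSub (3 + 2 * √2) * invSqrtOneSub (3 - 2 * √2)) = 1 := by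
  set E := invSqrtOneSub (3 + 2 * √2) * invSqrtOneSub (3 - 2 * √2) with hE
  have hfactor : (1 - C (3 + 2 * √2) * X) * (1 - C (3 - 2 * √2) * X) =
      (1 - 6 * X + X ^ 2 : ℝ⟦X⟧) := by
    have h2 : (C √2 ^ 2 : ℝ⟦X⟧) = 2 := by rw [← map_pow, sq_sqrt_two, map_ofNat]
    simp only [map_add, map_sub, map_mul, map_ofNat]
    linear_combination -4 * X ^ 2 * h2
  have hsq : (discrSqrt * E) ^ 2 = 1 := by
    rw [mul_pow, discrSqrt_sq, ← hfactor, hE]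
    linear_combination
      (invSqrtOneSub (3 - 2 * √2) ^ 2 * (1 - C (3 - 2 * √2) * X)) *
        invSqrtOneSub_sq_mul (3 + 2 * √2) + invSqrtOneSub_sq_mul (3 - 2 * √2)
  refine (sq_eq_one_iff.1 hsq).resolve_right fun hneg => ?_
  have h := congrArg constantCoeff hneg
  rw [map_mul, map_mul, constantCoeff_discrSqrt, constantCoeff_invSqrtOneSub,
    constantCoeff_invSqrtOneSub, map_neg, map_one] at h
  norm_num at h

theorem sepSeries_altTypeLen_eq_mul_invSqrtOneSub :
    sepSeries (fun _ σ => altTypeLen σ true false) =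
      (X - X ^ 2) * (invSqrtOneSub (3 + 2 * √2) * invSqrtOneSub (3 - 2 * √2)) := by
  rw [← discrSqrt_mul_sepSeries_altTypeLen, mul_right_comm, discrSqrt_mul_invSqrtOneSub, one_mul]

theorem hasSum_coeff_sepSeries_altTypeLen {t : ℝ} (ht : |t| < 3 - 2 * √2) :
    HasSum (fun n => coeff n (sepSeries fun _ σ => altTypeLen σ true false) * t ^ n)
      (t * (1 - t) / √(t ^ 2 - 6 * t + 1)) := by
  have hprod : (3 + 2 * √2) * (3 - 2 * √2) = 1 := by linear_combination -4 * sq_sqrt_two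
  have hα : |(3 + 2 * √2) * t| < 1 := by
    rw [abs_mul, abs_of_pos (by positivity), ← hprod]
    gcongr
  have hβ : |(3 - 2 * √2) * t| < 1 := by
    have hβ0 : 0 < 3 - 2 * √2 := (abs_nonneg t).trans_lt ht
    rw [abs_mul, abs_of_pos hβ0]
    refine (mul_lt_mul_of_pos_left ht hβ0).trans_le ?_
    rw [← hprod]
    gcongr
    linarith [Real.sqrt_nonneg 2]
  have hpoly : HasSum (fun n => coeff n (X - X ^ 2 : ℝ⟦X⟧) * t ^ n) (t - t ^ 2) := by
    have hcoe : (X - X ^ 2 : ℝ⟦X⟧) = ((Polynomial.X - Polynomial.X ^ 2 : Polynomial ℝ) : ℝ⟦X⟧) := by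
      rw [Polynomial.coe_sub, Polynomial.coe_pow, Polynomial.coe_X]
    have heval : t - t ^ 2 = (Polynomial.X - Polynomial.X ^ 2 : Polynomial ℝ).eval t := by
      rw [Polynomial.eval_sub, Polynomial.eval_pow, Polynomial.eval_X]
    rw [hcoe, heval]
    exact hasSum_coeff_polynomial_mul_pow _ t
  have hdiscr : t ^ 2 - 6 * t + 1 = (1 - (3 + 2 * √2) * t) * (1 - (3 - 2 * √2) * t) := by
    linear_combination 4 * t ^ 2 * sq_sqrt_two
  rw [sepSeries_altTypeLen_eq_mul_invSqrtOneSub, hdiscr,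
    Real.sqrt_mul (sub_nonneg.2 (le_of_abs_le hα.le)), div_eq_mul_inv, mul_inv, mul_one_sub, ← sq]
  exact hasSum_coeff_mul_mul_pow hpoly
    (hasSum_coeff_mul_mul_pow (hasSum_coeff_invSqrtOneSub hα) (hasSum_coeff_invSqrtOneSub hβ))

end Evaluation

/-- The generating function `G^{+,-}(t) = ∑_{n≥1} sₙ cₙ^{+,-} tⁿ = t(1-t)/√(t² - 6t + 1)`
for `|t| < 3 - 2√2`, where `cₙ^{+,-}` is the mean of `Aₙ^{+,-}` over indecomposable
separable permutations of `[n]`. -/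
theorem genfun_G_pm (t : ℝ) (ht : |t| < 3 - 2 * Real.sqrt 2) :
    HasSum (fun n : ℕ => ((SEP (n + 1)).card : ℝ) *
        indecExp (n + 1) (fun σ => (altTypeLen σ true false : ℝ)) * t ^ (n + 1))
      (t * (1 - t) / Real.sqrt (t ^ 2 - 6 * t + 1)) := by
  have hzero : PowerSeries.coeff 0 (sepSeries fun _ σ => altTypeLen σ true false) = 0 := by
    simp only [sepSeries, PowerSeries.coeff_mk, altTypeLen_true_false_zero, Nat.cast_zero,
      Finset.sum_const_zero]
  have hsucc : ∀ n, (#(SEP (n + 1)) : ℝ) * indecExp (n + 1) (fun σ => (altTypeLen σ true false : ℝ))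
      = PowerSeries.coeff (n + 1) (sepSeries fun _ σ => altTypeLen σ true false) := fun n => by
    rw [sepSeries, PowerSeries.coeff_mk,
      card_mul_indecExp n.succ_pos fun σ => by rw [altTypeLen_mul_revPerm]]
  simpa only [hsucc, Finset.sum_range_one, hzero, zero_mul, sub_zero] using
    (hasSum_nat_add_iff' 1).2 (hasSum_coeff_sepSeries_altTypeLen ht)
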